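/- arXiv:2104.05907 — 2 statements merged into one kernel-verified Lean document; each statement's English description precedes it below -/
import Mathlib

section
/- Let (G₁,T₁) and (G₂,T₂) be clean grafts, and let X ⊆ T₁ be a set of vertices with |X| = |T₂| such that all vertices of X have the same neighbourhood in G₁. Then join((G₁,T₁),X,(G₂,T₂)) is a clean graft. -/
universe u

/-- A *wheel* is a graph consisting of an induced cycle of length at least 4 together with a
single additional vertex (the hub) having at least 3 neighbours on the cycle. -/
def IsWheel {V : Type u} (G : SimpleGraph V) : Prop :=
  ∃ (w : V) (n : ℕ), 4 ≤ n ∧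
    Nonempty (G.induce {u | u ≠ w} ≃g SimpleGraph.cycleGraph n) ∧
    3 ≤ (G.neighborSet w).ncard

/-- A graph is a *fan with pivot `f`* if deleting `f` leaves an induced path and `f` has at
least 3 neighbours (necessarily on that path). -/
def IsFanWithPivot {V : Type u} (G : SimpleGraph V) (f : V) : Prop :=
  (∃ n : ℕ, Nonempty (G.induce {u | u ≠ f} ≃g SimpleGraph.pathGraph n)) ∧
    3 ≤ (G.neighborSet f).ncard

/-- A *fan* is a graph consisting of an induced path and a single additional vertex (the pivot)
with at least 3 neighbours on the path. -/
def IsFan {V : Type u} (G : SimpleGraph V) : Prop :=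
  ∃ f : V, IsFanWithPivot G f

/-- A *guarded fan* is a graft `(F, M)` such that `F` is a fan with pivot `f` and both
endpoints of the path `F \ {f}` lie in `M`. -/
def IsGuardedFan {V : Type u} (G : SimpleGraph V) (M : Set V) : Prop :=
  ∃ (f : V) (n : ℕ) (e : G.induce {u | u ≠ f} ≃g SimpleGraph.pathGraph (n + 1)),
    3 ≤ (G.neighborSet f).ncard ∧
    ((e.symm 0 : {u // u ≠ f}) : V) ∈ M ∧ ((e.symm (Fin.last n) : {u // u ≠ f}) : V) ∈ M

/-- A *mountable path* is a graft `(P, M)` such that `P` is a path and `|M| ≥ 3`. -/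
def IsMountablePath {V : Type u} (G : SimpleGraph V) (M : Set V) : Prop :=
  (∃ n : ℕ, Nonempty (G ≃g SimpleGraph.pathGraph n)) ∧ 3 ≤ M.ncard

/-- A *theta* is a graph consisting of three internally vertex-disjoint paths of length at
least 2 with common endpoints, such that every edge lies on one of the three paths. -/
def IsTheta {V : Type u} (G : SimpleGraph V) : Prop :=
  ∃ (a b : V) (p₁ p₂ p₃ : G.Walk a b),
    a ≠ b ∧ p₁.IsPath ∧ p₂.IsPath ∧ p₃.IsPath ∧
    2 ≤ p₁.length ∧ 2 ≤ p₂.length ∧ 2 ≤ p₃.length ∧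
    (∀ v, v ∈ p₁.support → v ∈ p₂.support → v = a ∨ v = b) ∧
    (∀ v, v ∈ p₁.support → v ∈ p₃.support → v = a ∨ v = b) ∧
    (∀ v, v ∈ p₂.support → v ∈ p₃.support → v = a ∨ v = b) ∧
    (∀ v : V, v ∈ p₁.support ∨ v ∈ p₂.support ∨ v ∈ p₃.support) ∧
    (∀ e ∈ G.edgeSet, e ∈ p₁.edges ∨ e ∈ p₂.edges ∨ e ∈ p₃.edges)

/-- A graft `(G, T)` is *clean* if (1) `G` is triangle-free, (2) `T` is a stable set,
(3) `G` contains no induced wheel, (4) `(G,T)` contains no induced guarded fan, and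
(5) `(G,T)` contains no induced mountable path. -/
def IsCleanGraft {V : Type u} (G : SimpleGraph V) (T : Set V) : Prop :=
  G.CliqueFree 3 ∧
  (∀ u ∈ T, ∀ v ∈ T, ¬ G.Adj u v) ∧
  (∀ s : Set V, ¬ IsWheel (G.induce s)) ∧
  (∀ s : Set V, ¬ IsGuardedFan (G.induce s) (Subtype.val ⁻¹' T)) ∧
  (∀ s : Set V, ¬ IsMountablePath (G.induce s) (Subtype.val ⁻¹' T))

/-- The graph of `pendent((G,T),t)`: a new vertex (`none`) is added whose only
neighbour is `t`. -/
def pendentGraph {V : Type u} (G : SimpleGraph V) (t : V) : SimpleGraph (Option V) :=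
  SimpleGraph.fromRel (fun a b =>
    (∃ u v : V, a = some u ∧ b = some v ∧ G.Adj u v) ∨ (a = none ∧ b = some t))

/-- The distinguished set of `pendent((G,T),t)`: `T' = (T ∪ {t'}) \ {t}`. -/
def pendentT {V : Type u} (T : Set V) (t : V) : Set (Option V) :=
  insert none (some '' (T \ {t}))

/-- The graph of `clone((G,T),t)`: a new vertex (`none`) is added whose neighbourhood is
exactly the neighbourhood of `t` in `G`. -/
def cloneGraph {V : Type u} (G : SimpleGraph V) (t : V) : SimpleGraph (Option V) :=
  SimpleGraph.fromRel (fun a b =>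
    (∃ u v : V, a = some u ∧ b = some v ∧ G.Adj u v) ∨
    (∃ v : V, a = none ∧ b = some v ∧ G.Adj t v))

/-- The distinguished set of `clone((G,T),t)`: `T' = T ∪ {t'}`. -/
def cloneT {V : Type u} (T : Set V) : Set (Option V) :=
  insert none (some '' T)

/-- The graph of `join((G₁,T₁), X, (G₂,T₂))`, where the bijection `φ : X ≃ T₂` prescribes
which vertex of `T₂` is identified with which vertex of `X`. -/
def joinGraph {V₁ V₂ : Type u} (G₁ : SimpleGraph V₁) (G₂ : SimpleGraph V₂)
    (X : Set V₁) (T₂ : Set V₂) (φ : X ≃ T₂) :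
    SimpleGraph (V₁ ⊕ {v : V₂ // v ∉ T₂}) :=
  SimpleGraph.fromRel (fun a b =>
    (∃ u v : V₁, a = Sum.inl u ∧ b = Sum.inl v ∧ G₁.Adj u v) ∨
    (∃ u v : {v : V₂ // v ∉ T₂}, a = Sum.inr u ∧ b = Sum.inr v ∧ G₂.Adj ↑u ↑v) ∨
    (∃ (x : X) (w : {v : V₂ // v ∉ T₂}), a = Sum.inl ↑x ∧ b = Sum.inr w ∧ G₂.Adj ↑(φ x) ↑w) ∨
    (∃ x y : X, a = Sum.inl ↑x ∧ b = Sum.inl ↑y ∧ G₂.Adj ↑(φ x) ↑(φ y)))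

/-- The distinguished set of `join((G₁,T₁), X, (G₂,T₂))` is `T₁`. -/
def joinT {V₁ V₂ : Type u} (T₁ : Set V₁) (T₂ : Set V₂) : Set (V₁ ⊕ {v : V₂ // v ∉ T₂}) :=
  Sum.inl '' T₁

/-- A *graph–stable-set pair*: a graph together with a set of (stable) sets of vertices. -/
structure GSPair : Type 1 where
  V : Type
  G : SimpleGraph V
  S : Set (Set V)

/-- The `NEXT` procedure of the Burling construction.  The new vertex type consists of the
original vertices, the vertices `(S, u)` of the copy `H_S` for each `S ∈ 𝒮`, and the new
vertices `v_{S,T}` for `S ∈ 𝒮` and `T ∈ 𝒮(H_S)`. -/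
def NEXT (P : GSPair) : GSPair where
  V := P.V ⊕ ((↥P.S × P.V) ⊕ (↥P.S × ↥P.S))
  G := SimpleGraph.fromRel (fun a b =>
    (∃ u v : P.V, a = Sum.inl u ∧ b = Sum.inl v ∧ P.G.Adj u v) ∨
    (∃ (S : ↥P.S) (u v : P.V),
      a = Sum.inr (Sum.inl (S, u)) ∧ b = Sum.inr (Sum.inl (S, v)) ∧ P.G.Adj u v) ∨
    (∃ (S T : ↥P.S) (u : P.V),
      a = Sum.inr (Sum.inr (S, T)) ∧ b = Sum.inr (Sum.inl (S, u)) ∧ u ∈ (T : Set P.V)))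
  S := { A | ∃ S T : ↥P.S,
      A = Sum.inl '' (S : Set P.V) ∪ (fun u => Sum.inr (Sum.inl (S, u))) '' (T : Set P.V) ∨
      A = insert (Sum.inr (Sum.inr (S, T))) (Sum.inl '' (S : Set P.V)) }

/-- `BurlingPair k` is the graph–stable-set pair `(G'_{k+1}, 𝒮_{k+1})`; in particular
`BurlingPair 0 = (K₁, {V(K₁)})` and `(BurlingPair (k-1)).G` is the `k`-th Burling graph. -/
def BurlingPair : ℕ → GSPair
  | 0 => ⟨Unit, ⊥, {Set.univ}⟩
  | (k + 1) => NEXT (BurlingPair k)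

/-- A *graft*: a graph together with a distinguished set of vertices. -/
structure GraftData : Type 1 where
  V : Type
  G : SimpleGraph V
  T : Set V

/-- The step `(G_k, T_k) ↦ (G_{k+1}, T_{k+1})` of the graft construction of Burling graphs,
with all the pendent, clone and join operations of the construction performed at once.

Vertices: `inl x` for `x ∈ V(G_k)`; `inr (inl ⟨u, w⟩)` for `u ∈ T_k` and
`w : ↥T_k ⊕ ↥T_k` with `w ≠ inl u`, the `2|T_k| - 1` clones of `u` (so that
`X_u = {u} ∪ {⟨u, w⟩}` has been identified with `S'_u ≃ T_k ⊕ T_k`, the vertex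
indexed by `inl v` being the copy of `v` in `S_u` and the vertex indexed by `inr v`
being the pendant `t_{u,v}`); and `inr (inr (u, y))` for the vertices of the copy
`H'_u` not in `S'_u`, namely `y = inl x` for a copy of `x ∈ V(G_k) \ T_k` and
`y = inr v` for the clone `v_u` of `v ∈ T_k`. -/
def nextGraft (P : GraftData) : GraftData where
  V := P.V ⊕ ((Σ u : ↥P.T, {w : ↥P.T ⊕ ↥P.T // w ≠ Sum.inl u}) ⊕
        (↥P.T × ({v : P.V // v ∉ P.T} ⊕ ↥P.T)))
  G := SimpleGraph.fromRel (fun a b =>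
    -- edges of `G_k`
    (∃ x y : P.V, a = Sum.inl x ∧ b = Sum.inl y ∧ P.G.Adj x y) ∨
    -- each clone of `u` is adjacent to `N_{G_k}(u)`
    (∃ (x : P.V) (u : ↥P.T) (w : {w : ↥P.T ⊕ ↥P.T // w ≠ Sum.inl u}),
      a = Sum.inl x ∧ b = Sum.inr (Sum.inl ⟨u, w⟩) ∧ P.G.Adj ↑u x) ∨
    -- `u` (identified with the copy of `u` in `S_u`) is adjacent to the copies of `N_{G_k}(u)`
    (∃ (u : ↥P.T) (x : {v : P.V // v ∉ P.T}),
      a = Sum.inl ↑u ∧ b = Sum.inr (Sum.inr (u, Sum.inl x)) ∧ P.G.Adj ↑u ↑x) ∨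
    -- the clone of `u` identified with the copy of `v ∈ S_u` is adjacent to copies of `N(v)`
    (∃ (u : ↥P.T) (w : {w : ↥P.T ⊕ ↥P.T // w ≠ Sum.inl u}) (v : ↥P.T)
        (x : {v : P.V // v ∉ P.T}),
      a = Sum.inr (Sum.inl ⟨u, w⟩) ∧ b = Sum.inr (Sum.inr (u, Sum.inl x)) ∧
        (w : ↥P.T ⊕ ↥P.T) = Sum.inl v ∧ P.G.Adj ↑v ↑x) ∨
    -- the clone of `u` identified with the pendant `t_{u,v}` is adjacent to the clone `v_u`
    (∃ (u : ↥P.T) (w : {w : ↥P.T ⊕ ↥P.T // w ≠ Sum.inl u}) (v : ↥P.T),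
      a = Sum.inr (Sum.inl ⟨u, w⟩) ∧ b = Sum.inr (Sum.inr (u, Sum.inr v)) ∧
        (w : ↥P.T ⊕ ↥P.T) = Sum.inr v) ∨
    -- edges of `G_k` inside the copy `H'_u`
    (∃ (u : ↥P.T) (x y : {v : P.V // v ∉ P.T}),
      a = Sum.inr (Sum.inr (u, Sum.inl x)) ∧ b = Sum.inr (Sum.inr (u, Sum.inl y)) ∧
        P.G.Adj ↑x ↑y) ∨
    -- the clone `v_u` is adjacent to the copies of `N_{G_k}(v)`
    (∃ (u : ↥P.T) (x : {v : P.V // v ∉ P.T}) (v : ↥P.T),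
      a = Sum.inr (Sum.inr (u, Sum.inl x)) ∧ b = Sum.inr (Sum.inr (u, Sum.inr v)) ∧
        P.G.Adj ↑v ↑x))
  T := { a | (∃ u ∈ P.T, a = Sum.inl u) ∨
      (∃ c : (Σ u : ↥P.T, {w : ↥P.T ⊕ ↥P.T // w ≠ Sum.inl u}), a = Sum.inr (Sum.inl c)) }

/-- `BurlingGraft k` is the graft `(G_{k+1}, T_{k+1})`; in particular
`BurlingGraft 0 = (K₂, {t})`. -/
def BurlingGraft : ℕ → GraftData
  | 0 => ⟨Bool, ⊤, {true}⟩
  | (k + 1) => nextGraft (BurlingGraft k)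

/-- The graph `G*` obtained from a graph–stable-set pair by adding, for each `S ∈ 𝒮`,
a new vertex `v_S` whose neighbourhood is exactly `S`. -/
def GStar (P : GSPair) : SimpleGraph (P.V ⊕ ↥P.S) :=
  SimpleGraph.fromRel (fun a b =>
    (∃ u v : P.V, a = Sum.inl u ∧ b = Sum.inl v ∧ P.G.Adj u v) ∨
    (∃ (S : ↥P.S) (u : P.V), a = Sum.inr S ∧ b = Sum.inl u ∧ u ∈ (S : Set P.V)))

/-- The grafts obtainable from the graft `(K₂, {t})` by a finite sequence of pendent,
clone and join operations. -/
inductive Obtainable : GraftData → Prop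
  | base : Obtainable ⟨Bool, ⊤, {true}⟩
  | pendent (P : GraftData) (hP : Obtainable P) (t : P.V) (ht : t ∈ P.T) :
      Obtainable ⟨Option P.V, pendentGraph P.G t, pendentT P.T t⟩
  | clone (P : GraftData) (hP : Obtainable P) (t : P.V) (ht : t ∈ P.T) :
      Obtainable ⟨Option P.V, cloneGraph P.G t, cloneT P.T⟩
  | join (P Q : GraftData) (hP : Obtainable P) (hQ : Obtainable Q)
      (X : Set P.V) (hX : X ⊆ P.T)
      (hnb : ∀ x ∈ X, ∀ y ∈ X, P.G.neighborSet x = P.G.neighborSet y)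
      (φ : X ≃ ↥Q.T) :
      Obtainable ⟨P.V ⊕ {v : Q.V // v ∉ Q.T}, joinGraph P.G Q.G X Q.T φ, Sum.inl '' P.T⟩

open SimpleGraph

/-!
In the join `G`, let `L` and `R` be the vertex sets of `G₁` and `G₂`, so that `L ∩ R = X`. A vertex
outside `R` with a neighbour in `X` is adjacent to all of `X`. Hence an induced path with both ends
in `L` that leaves `L` lies in `R`: a vertex outside `R` would yield one that is adjacent to the
`X`-vertices on both sides of the excursion.

A mountable path, trimmed to its first and last vertex in `T₁`, and the path of a guarded fan
therefore lie in `L` or in `R`, and `X` plays the role of `T₂` in `R`. Deleting a vertex `a` outside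
`R` from an induced cycle contained in neither side leaves a path in `R` with both ends in `X`.
On this path a hub in `X` has at most one neighbour, as otherwise it would shortcut the path to a
mountable one; a hub outside `L` has at most two and is not adjacent to `a`; a hub outside `R` only
sees vertices of `X`, and none of them if it is adjacent to `a`.
-/

section Embedding

variable {U V W : Type*} {G : SimpleGraph V} {H : SimpleGraph W} {K : SimpleGraph U}

theorem exists_comp_eq_of_range_subset (e : H ↪g G) (f : K ↪g G)
    (h : Set.range f ⊆ Set.range e) : ∃ g : K ↪g H, e.comp g = f := by
  choose g hg using fun i ↦ h ⟨i, rfl⟩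
  have hinj : Function.Injective g := fun i j hij ↦ f.injective (by rw [← hg i, ← hg j, hij])
  refine ⟨⟨⟨g, hinj⟩, fun {i j} ↦ ?_⟩, DFunLike.ext _ _ hg⟩
  change H.Adj (g i) (g j) ↔ K.Adj i j
  rw [← e.map_adj_iff, hg, hg, f.map_adj_iff]

theorem ncard_neighborSet_eq_ncard_preimage {s : Set V} {w : s}
    (E : (G.induce s).induce {u | u ≠ w} ≃g K) :
    ((G.induce s).neighborSet w).ncard =
      ((fun i ↦ ((E.symm i : s) : V)) ⁻¹' G.neighborSet w).ncard := by
  have hinj : Function.Injective fun i ↦ (E.symm i : s) :=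
    Subtype.val_injective.comp E.symm.injective
  refine (Set.ncard_preimage_of_injective_subset_range hinj fun u hu ↦ ?_).symm
  have hne : u ≠ w := ((mem_neighborSet _ _ _).1 hu).ne'
  exact ⟨E ⟨u, hne⟩, congrArg Subtype.val (E.symm_apply_apply _)⟩

theorem exists_hub_iso_of_notMem_range (c : K ↪g G) {w : V} (hw : w ∉ Set.range c) :
    ∃ (s : Set V) (w' : s) (E : (G.induce s).induce {u | u ≠ w'} ≃g K),
      (w' : V) = w ∧ (fun i ↦ ((E.symm i : s) : V)) = c := by
  let s : Set V := insert w (Set.range c)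
  let w' : s := ⟨w, Set.mem_insert _ _⟩
  let ι : (G.induce s).induce {u | u ≠ w'} ↪g G := (Embedding.induce s).comp (Embedding.induce _)
  have hrange : Set.range c ⊆ Set.range ι := by
    rintro _ ⟨i, rfl⟩
    exact ⟨⟨⟨c i, .inr ⟨i, rfl⟩⟩, fun h ↦ hw ⟨i, congrArg Subtype.val h⟩⟩, rfl⟩
  obtain ⟨g, hg⟩ := exists_comp_eq_of_range_subset ι c hrange
  have hsurj : Function.Surjective g := by
    rintro ⟨⟨_, rfl | ⟨i, rfl⟩⟩, hu⟩
    · exact absurd rfl hu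
    · exact ⟨i, ι.injective (DFunLike.congr_fun hg i)⟩
  exact ⟨s, w', (RelIso.ofSurjective g hsurj).symm, rfl, congrArg DFunLike.coe hg⟩

theorem exists_isWheel_induce_iff :
    (∃ s, IsWheel (G.induce s)) ↔ ∃ n, ∃ c : cycleGraph n ↪g G, ∃ w, 4 ≤ n ∧
      w ∉ Set.range c ∧ 3 ≤ (c ⁻¹' G.neighborSet w).ncard := by
  constructor
  · rintro ⟨s, w, n, hn, ⟨E⟩, hw⟩
    refine ⟨n, (Embedding.induce s).comp ((Embedding.induce _).comp E.symm.toEmbedding), w, hn,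
      ?_, (ncard_neighborSet_eq_ncard_preimage E).symm ▸ hw⟩
    rintro ⟨i, hi⟩
    exact (E.symm i).2 (Subtype.val_injective hi)
  · rintro ⟨n, c, w, hn, hw, hc⟩
    obtain ⟨s, w, E, rfl, hE⟩ := exists_hub_iso_of_notMem_range c hw
    exact ⟨s, w, n, hn, ⟨E⟩, by rwa [ncard_neighborSet_eq_ncard_preimage E, hE]⟩

theorem exists_isGuardedFan_induce_iff {T : Set V} :
    (∃ s, IsGuardedFan (G.induce s) (Subtype.val ⁻¹' T)) ↔
      ∃ n, ∃ p : pathGraph (n + 1) ↪g G, ∃ f, p 0 ∈ T ∧ p (Fin.last n) ∈ T ∧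
        f ∉ Set.range p ∧ 3 ≤ (p ⁻¹' G.neighborSet f).ncard := by
  constructor
  · rintro ⟨s, f, n, E, hf, h0, hlast⟩
    refine ⟨n, (Embedding.induce s).comp ((Embedding.induce _).comp E.symm.toEmbedding), f, h0,
      hlast, ?_, (ncard_neighborSet_eq_ncard_preimage E).symm ▸ hf⟩
    rintro ⟨i, hi⟩
    exact (E.symm i).2 (Subtype.val_injective hi)
  · rintro ⟨n, p, f, h0, hlast, hf, hp⟩
    obtain ⟨s, f, E, rfl, hE⟩ := exists_hub_iso_of_notMem_range p hf
    exact ⟨s, f, n, E, by rwa [ncard_neighborSet_eq_ncard_preimage E, hE],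
      by rwa [Set.mem_preimage, congrFun hE], by rwa [Set.mem_preimage, congrFun hE]⟩

theorem exists_isMountablePath_induce_iff {T : Set V} :
    (∃ s, IsMountablePath (G.induce s) (Subtype.val ⁻¹' T)) ↔
      ∃ n, ∃ p : pathGraph n ↪g G, 3 ≤ (p ⁻¹' T).ncard := by
  constructor
  · rintro ⟨s, ⟨n, ⟨E⟩⟩, hT⟩
    refine ⟨n, (Embedding.induce s).comp E.symm.toEmbedding, hT.trans_eq ?_⟩
    exact (Set.ncard_preimage_of_injective_subset_range E.symm.injective
      (by simp [E.symm.surjective.range_eq])).symm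
  · rintro ⟨n, p, hT⟩
    refine ⟨Set.range p, ⟨n, ⟨p.isoInduceRange.symm⟩⟩, hT.trans_eq ?_⟩
    exact Set.ncard_preimage_of_injective_subset_range (s := Subtype.val ⁻¹' T)
      p.isoInduceRange.injective (by simp [p.isoInduceRange.surjective.range_eq])

end Embedding
/-- The part on `s` of the graft `(G, T)` is clean: this is cleanness of the induced subgraft
`(G[s], T ∩ s)`, with induced paths and cycles given as embeddings into `G` with range in `s`,
so that subgrafts of the same ambient graph can be compared. -/
structure IsCleanOn {V : Type*} (G : SimpleGraph V) (s T : Set V) : Prop where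
  cliqueFreeOn : G.CliqueFreeOn s 3
  isIndepSet : G.IsIndepSet (s ∩ T)
  wheel ⦃n : ℕ⦄ (c : cycleGraph n ↪g G) ⦃w : V⦄ : 4 ≤ n → Set.range c ⊆ s → w ∈ s →
    w ∉ Set.range c → (c ⁻¹' G.neighborSet w).ncard ≤ 2
  fan ⦃n : ℕ⦄ (p : pathGraph (n + 1) ↪g G) ⦃f : V⦄ : Set.range p ⊆ s → p 0 ∈ T →
    p (Fin.last n) ∈ T → f ∈ s → f ∉ Set.range p → (p ⁻¹' G.neighborSet f).ncard ≤ 2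
  path ⦃n : ℕ⦄ (p : pathGraph n ↪g G) : Set.range p ⊆ s → (p ⁻¹' T).ncard ≤ 2

theorem isCleanOn_univ_iff {V : Type u} {G : SimpleGraph V} {T : Set V} :
    IsCleanOn G Set.univ T ↔ IsCleanGraft G T := by
  rw [IsCleanGraft, ← not_exists, ← not_exists, ← not_exists, exists_isWheel_induce_iff,
    exists_isGuardedFan_induce_iff, exists_isMountablePath_induce_iff]
  push Not
  constructor
  · intro h
    exact ⟨(cliqueFreeOn_univ G).1 h.cliqueFreeOn,
      fun u hu v hv huv ↦ h.isIndepSet ⟨trivial, hu⟩ ⟨trivial, hv⟩ huv.ne huv,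
      fun n c w hn hw ↦ Nat.lt_succ_of_le (h.wheel c hn (Set.subset_univ _) trivial hw),
      fun n p f h0 hn hf ↦ Nat.lt_succ_of_le (h.fan p (Set.subset_univ _) h0 hn trivial hf),
      fun n p ↦ Nat.lt_succ_of_le (h.path p (Set.subset_univ _))⟩
  · rintro ⟨htri, hstable, hwheel, hfan, hpath⟩
    exact
      { cliqueFreeOn := (cliqueFreeOn_univ G).2 htri
        isIndepSet := fun u hu v hv _ ↦ hstable u hu.2 v hv.2
        wheel := fun n c w hn _ _ hw ↦ Nat.le_of_lt_succ (hwheel n c w hn hw)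
        fan := fun n p f _ h0 hn _ hf ↦ Nat.le_of_lt_succ (hfan n p f h0 hn hf)
        path := fun n p _ ↦ Nat.le_of_lt_succ (hpath n p) }

theorem IsCleanOn.range {V W : Type*} {G : SimpleGraph V} {H : SimpleGraph W} {T : Set V}
    (e : H ↪g G) (h : IsCleanOn H Set.univ (e ⁻¹' T)) : IsCleanOn G (Set.range e) T where
  cliqueFreeOn := by
    rw [← cliqueFree_induce_iff]
    exact ((cliqueFreeOn_univ H).1 h.cliqueFreeOn).comap e.isoInduceRange.symm.isContained
  isIndepSet := by
    rintro _ ⟨⟨u, rfl⟩, hu⟩ _ ⟨⟨v, rfl⟩, hv⟩ hne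
    rw [e.map_adj_iff]
    exact h.isIndepSet ⟨trivial, hu⟩ ⟨trivial, hv⟩ fun huv ↦ hne (congrArg e huv)
  wheel := by
    rintro n c _ hn hc ⟨w, rfl⟩ hw
    obtain ⟨c, rfl⟩ := exists_comp_eq_of_range_subset e c hc
    rw [Embedding.coe_comp, Set.preimage_comp, e.preimage_neighborSet]
    exact h.wheel c hn (Set.subset_univ _) trivial fun ⟨i, hi⟩ ↦ hw ⟨i, congrArg e hi⟩
  fan := by
    rintro n p _ hp h0 hn ⟨f, rfl⟩ hf
    obtain ⟨p, rfl⟩ := exists_comp_eq_of_range_subset e p hp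
    rw [Embedding.coe_comp, Set.preimage_comp, e.preimage_neighborSet]
    exact h.fan p (Set.subset_univ _) h0 hn trivial fun ⟨i, hi⟩ ↦ hf ⟨i, congrArg e hi⟩
  path n p hp := by
    obtain ⟨p, rfl⟩ := exists_comp_eq_of_range_subset e p hp
    exact h.path p (Set.subset_univ _)

theorem cliqueFreeOn_three_iff {V : Type*} {G : SimpleGraph V} {s : Set V} :
    G.CliqueFreeOn s 3 ↔
      ∀ a ∈ s, ∀ b ∈ s, ∀ c ∈ s, G.Adj a b → G.Adj a c → ¬ G.Adj b c := by
  classical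
  constructor
  · intro h a ha b hb c hc hab hac hbc
    exact h (t := {a, b, c}) (by simp [Set.insert_subset_iff, *])
      (is3Clique_triple_iff.2 ⟨hab, hac, hbc⟩)
  · intro h t ht hclique
    obtain ⟨a, b, c, hab, hac, hbc, rfl⟩ := is3Clique_iff.1 hclique
    simp only [Finset.coe_insert, Finset.coe_singleton, Set.insert_subset_iff,
      Set.singleton_subset_iff] at ht
    exact h a ht.1 b ht.2.1 c ht.2.2 hab hac hbc

theorem ncard_sdiff_singleton_eq_ncard_preimage {α β : Type*} {d : α → β} {k : β}
    (hinj : Function.Injective d) (hd : Set.range d = {k}ᶜ) (S : Set β) :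
    (S \ {k}).ncard = (d ⁻¹' S).ncard := by
  rw [← Set.ncard_preimage_of_injective_subset_range hinj (hd ▸ fun i hi ↦ hi.2)]
  congr 1
  ext i
  have : d i ≠ k := hd.le ⟨i, rfl⟩
  simp [this]

section PathGraph

variable {V : Type*} {G : SimpleGraph V} {n : ℕ}

theorem exists_pathGraph_embedding_coe_eq (f : Fin n → V)
    (hf : ∀ i j, i < j → f i ≠ f j ∧ (G.Adj (f i) (f j) ↔ (i : ℕ) + 1 = j)) :
    ∃ p : pathGraph n ↪g G, ⇑p = f := by
  refine ⟨⟨⟨f, .of_lt_imp_ne fun i j hij ↦ (hf i j hij).1⟩, fun {i j} ↦ ?_⟩, rfl⟩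
  change G.Adj (f i) (f j) ↔ (pathGraph n).Adj i j
  rw [pathGraph_adj]
  rcases lt_trichotomy i j with hij | rfl | hij
  · rw [(hf i j hij).2]
    lia
  · simp
  · rw [G.adj_comm, (hf j i hij).2]
    lia

theorem exists_pathGraph_embedding_trim (p : pathGraph n ↪g G) {S : Set V}
    (hS : (p ⁻¹' S).Nonempty) :
    ∃ m, ∃ q : pathGraph (m + 1) ↪g G, q 0 ∈ S ∧ q (Fin.last m) ∈ S ∧
      (q ⁻¹' S).ncard = (p ⁻¹' S).ncard := by
  obtain ⟨a, ha, hmin : ∀ i ∈ p ⁻¹' S, a ≤ i⟩ := Set.exists_min_image _ id (Set.toFinite _) hS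
  obtain ⟨b, hb, hmax : ∀ i ∈ p ⁻¹' S, i ≤ b⟩ := Set.exists_max_image _ id (Set.toFinite _) hS
  have hab : a ≤ b := hmin b hb
  obtain ⟨σ, hσ⟩ := exists_pathGraph_embedding_coe_eq (G := pathGraph n)
    (fun i : Fin (b - a + 1) ↦ (⟨a + i, by lia⟩ : Fin n)) fun i j hij ↦
      ⟨by grind, by simp only [pathGraph_adj]; lia⟩
  have hσa : σ 0 = a := by simp [hσ]
  have hσb : σ (Fin.last _) = b := by simpa [hσ, Fin.ext_iff] using Nat.add_sub_cancel' hab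
  have hrange : p ⁻¹' S ⊆ Set.range σ := fun i hi ↦ by
    have hai : (a : ℕ) ≤ i := hmin i hi
    have hib : (i : ℕ) ≤ b := hmax i hi
    exact ⟨⟨i - a, by lia⟩, by simpa [hσ, Fin.ext_iff] using Nat.add_sub_cancel' hai⟩
  refine ⟨b - a, p.comp σ, ?_, ?_, ?_⟩
  · simpa [hσa] using ha
  · simpa [hσb] using hb
  · exact Set.ncard_preimage_of_injective_subset_range σ.injective hrange

theorem exists_castSucc_mem_succ_notMem {S : Set (Fin (n + 1))} {i j : Fin (n + 1)} (hij : i ≤ j)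
    (hi : i ∈ S) (hj : j ∉ S) :
    ∃ k : Fin n, i ≤ k.castSucc ∧ k.succ ≤ j ∧ k.castSucc ∈ S ∧ k.succ ∉ S := by
  induction j using Fin.induction with
  | zero => exact absurd (Fin.le_zero_iff.1 hij ▸ hi) hj
  | succ k ih =>
    have hik : i ≤ k.castSucc := Fin.le_castSucc_iff.2 (hij.lt_of_ne fun h ↦ hj (h ▸ hi))
    by_cases hk : k.castSucc ∈ S
    · exact ⟨k, hik, le_rfl, hk, hj⟩
    · obtain ⟨l, hil, hlk, hl⟩ := ih hik hk
      exact ⟨l, hil, hlk.trans (Fin.castSucc_lt_succ).le, hl⟩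

theorem exists_pathGraph_embedding_compl (k : Fin (n + 2)) :
    ∃ d : pathGraph (n + 1) ↪g cycleGraph (n + 2), Set.range d = {k}ᶜ ∧
      ∀ i, (cycleGraph (n + 2)).Adj k (d i) ↔ i = 0 ∨ i = Fin.last n := by
  obtain ⟨d, hd⟩ := exists_pathGraph_embedding_coe_eq (G := cycleGraph (n + 2))
    (fun i : Fin (n + 1) ↦ k + i.succ) fun i j hij ↦ by
      refine ⟨by simpa using hij.ne, ?_⟩
      have h := Fin.coe_sub_iff_lt.2 (Fin.succ_lt_succ_iff.2 hij)
      have h' := Fin.sub_val_of_le (Fin.succ_le_succ_iff.2 hij.le)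
      simp only [cycleGraph_adj', add_sub_add_left_eq_sub, h, h', Fin.val_succ]
      lia
  refine ⟨d, ?_, fun i ↦ ?_⟩
  · ext u
    simp only [hd, Set.mem_range, Set.mem_compl_iff, Set.mem_singleton_iff]
    constructor
    · rintro ⟨i, rfl⟩
      simp
    · intro hu
      obtain ⟨i, hi⟩ := Fin.exists_succ_eq.2 (sub_ne_zero.2 hu)
      exact ⟨i, by rw [hi, add_sub_cancel]⟩
  · have h : ((0 : Fin (n + 2)) - i.succ : Fin (n + 2)).val = n + 2 - i.succ := by
      rw [Fin.coe_sub_iff_lt.2 (Fin.succ_pos i)]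
      simp
    rw [hd, cycleGraph_adj', sub_add_cancel_left, add_sub_cancel_left, ← zero_sub, h]
    simp only [Fin.val_succ, Fin.ext_iff, Fin.val_zero, Fin.val_last]
    lia

theorem exists_pathGraph_embedding_update {m : ℕ} (p : pathGraph n ↪g G) (σ : Fin m → Fin n)
    {k : Fin m} {w : V} (hw : w ∉ Set.range p)
    (hσ : ∀ i j, i ≠ k → j ≠ k → i < j → σ i < σ j ∧ ((σ i : ℕ) + 1 = σ j ↔ (i : ℕ) + 1 = j))
    (hadj : ∀ i ≠ k, G.Adj w (p (σ i)) ↔ (pathGraph m).Adj k i) :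
    ∃ q : pathGraph m ↪g G, ⇑q = Function.update (p ∘ σ) k w := by
  have hpw (i) : p i ≠ w := fun h ↦ hw ⟨i, h⟩
  refine exists_pathGraph_embedding_coe_eq _ fun i j hij ↦ ?_
  obtain rfl | hi := eq_or_ne i k
  · rw [Function.update_self, Function.update_of_ne hij.ne', Function.comp_apply, hadj j hij.ne',
      pathGraph_adj]
    exact ⟨(hpw _).symm, by lia⟩
  obtain rfl | hj := eq_or_ne j k
  · rw [Function.update_self, Function.update_of_ne hi, Function.comp_apply, G.adj_comm, hadj i hi,
      pathGraph_adj]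
    exact ⟨hpw _, by lia⟩
  · have := hσ i j hi hj hij
    rw [Function.update_of_ne hi, Function.update_of_ne hj, Function.comp_apply,
      Function.comp_apply, p.map_adj_iff, pathGraph_adj]
    exact ⟨p.injective.ne this.1.ne, by lia⟩

theorem exists_pathGraph_embedding_bypass (p : pathGraph (n + 1) ↪g G) {w : V}
    {b c : Fin (n + 1)} (hbc : (b : ℕ) + 2 ≤ c) (hw : w ∉ Set.range p) (hwb : G.Adj w (p b))
    (hwc : G.Adj w (p c)) (hadj : ∀ i, G.Adj w (p i) → b ≤ i ∧ i ≤ c) :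
    ∃ m, ∃ q : pathGraph (m + 1) ↪g G, q 0 = p 0 ∧ q (Fin.last m) = p (Fin.last n) ∧
      w ∈ Set.range q ∧ Set.range q ⊆ insert w (Set.range p) := by
  obtain ⟨δ, hδ⟩ := Nat.exists_eq_add_of_le hbc
  obtain ⟨m, rfl⟩ : ∃ m, n = m + δ := Nat.exists_eq_add_of_le' (by lia)
  let σ (i : Fin (m + 1)) : Fin (m + δ + 1) :=
    if h : (i : ℕ) ≤ b then ⟨i, by lia⟩ else ⟨i + δ, by lia⟩
  let k : Fin (m + 1) := ⟨b + 1, by lia⟩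
  have hσ (i : Fin (m + 1)) : (σ i : ℕ) = if (i : ℕ) ≤ b then (i : ℕ) else i + δ := by grind
  have hadj_iff (i) (hi : i ≠ k) : G.Adj w (p (σ i)) ↔ (pathGraph (m + 1)).Adj k i := by
    have hik : (i : ℕ) ≠ b + 1 := fun h ↦ hi (Fin.ext h)
    rw [pathGraph_adj]
    constructor
    · intro h
      have := hadj _ h
      simp only [Fin.le_def, hσ] at this
      grind
    · rintro (h | h)
      · rwa [show σ i = c from Fin.ext (by grind)]
      · rwa [show σ i = b from Fin.ext (by grind)]
  obtain ⟨q, hq⟩ := exists_pathGraph_embedding_update p σ hw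
    (fun i j hi hj hij ↦ by
      have hi' : (i : ℕ) ≠ b + 1 := fun h ↦ hi (Fin.ext h)
      have hj' : (j : ℕ) ≠ b + 1 := fun h ↦ hj (Fin.ext h)
      rw [Fin.lt_def, hσ, hσ]
      grind) hadj_iff
  have h0 : 0 ≠ k := Fin.ne_of_val_ne (Nat.succ_ne_zero _).symm
  have hlast : Fin.last m ≠ k := Fin.ne_of_val_ne (by simp only [k, Fin.val_last]; lia)
  refine ⟨m, q, ?_, ?_, ⟨k, by simp [hq]⟩, ?_⟩
  · simp [hq, h0, show σ 0 = 0 from Fin.ext (by simp [hσ])]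
  · have hσlast : σ (Fin.last m) = Fin.last _ := Fin.ext (by simp only [hσ, Fin.val_last]; grind)
    simp [hq, hlast, hσlast]
  · rw [hq, Set.range_subset_iff]
    intro i
    obtain rfl | hi := eq_or_ne i k
    · simp
    · simp [hi]

end PathGraph

namespace IsCleanOn

variable {V : Type*} {G : SimpleGraph V} {s T : Set V} {n : ℕ}

theorem ncard_preimage_cycleGraph_le_two (h : IsCleanOn G s T) (c : cycleGraph (n + 2) ↪g G)
    (hc : Set.range c ⊆ s) : (c ⁻¹' T).ncard ≤ 2 := by
  obtain ⟨k, hk⟩ : ∃ k, c k ∉ T := by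
    by_contra! hall
    have hadj : G.Adj (c 0) (c 1) := c.map_adj_iff.2 (by simp [cycleGraph_adj])
    exact h.isIndepSet ⟨hc ⟨0, rfl⟩, hall 0⟩ ⟨hc ⟨1, rfl⟩, hall 1⟩ hadj.ne hadj
  obtain ⟨d, hd, -⟩ := exists_pathGraph_embedding_compl k
  have hT : c ⁻¹' T ⊆ Set.range d := by
    rw [hd]
    rintro i hi rfl
    exact hk hi
  rw [← Set.ncard_preimage_of_injective_subset_range d.injective hT]
  exact h.path (c.comp d) ((Set.range_comp_subset_range d c).trans hc)

/-- A vertex `w ∈ T` with two neighbours on the path could replace the part of the path between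
them, giving an induced path through three vertices of `T`. -/
theorem ncard_preimage_neighborSet_le_one (h : IsCleanOn G s T) (p : pathGraph (n + 1) ↪g G)
    (hp : Set.range p ⊆ s) (h0 : p 0 ∈ T) (hlast : p (Fin.last n) ∈ T) {w : V} (hws : w ∈ s)
    (hwT : w ∈ T) (hw : w ∉ Set.range p) : (p ⁻¹' G.neighborSet w).ncard ≤ 1 := by
  by_contra! hcard
  obtain ⟨i, hi, j, hj, hij⟩ := (Set.one_lt_ncard (Set.toFinite _)).1 hcard
  obtain ⟨b, hb, hmin : ∀ l ∈ p ⁻¹' G.neighborSet w, b ≤ l⟩ :=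
    Set.exists_min_image _ id (Set.toFinite _) ⟨i, hi⟩
  obtain ⟨c, hc, hmax : ∀ l ∈ p ⁻¹' G.neighborSet w, l ≤ c⟩ :=
    Set.exists_max_image _ id (Set.toFinite _) ⟨i, hi⟩
  have hbc : b < c := by
    refine ((hmin i hi).trans (hmax i hi)).lt_of_ne fun hbc ↦ hij ?_
    exact (le_antisymm (hbc ▸ hmax i hi) (hmin i hi)).trans
      (le_antisymm (hmin j hj) (hbc ▸ hmax j hj))
  have hbc' : (b : ℕ) + 1 ≠ c := fun hbc ↦
    cliqueFreeOn_three_iff.1 h.cliqueFreeOn w hws (p b) (hp ⟨b, rfl⟩) (p c) (hp ⟨c, rfl⟩) hb hc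
      (p.map_adj_iff.2 (pathGraph_adj.2 (.inl hbc)))
  obtain ⟨m, q, hq0, hqlast, ⟨k, rfl⟩, hq⟩ := exists_pathGraph_embedding_bypass p (by lia) hw hb hc
    fun i hi ↦ ⟨hmin i hi, hmax i hi⟩
  have hq3 : 2 < (q ⁻¹' T).ncard := by
    refine (Set.two_lt_ncard (Set.toFinite _)).2
      ⟨0, by simpa [hq0], k, hwT, Fin.last m, by simpa [hqlast], ?_, ?_, ?_⟩
    · rintro rfl
      exact hw ⟨0, hq0.symm⟩
    · intro h0
      have h0n : 0 = Fin.last n := p.injective (hq0.symm.trans ((congrArg q h0).trans hqlast))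
      exact (hbc.trans_le (Fin.le_last c)).not_ge (h0n ▸ Fin.zero_le b)
    · rintro rfl
      exact hw ⟨_, hqlast.symm⟩
  exact hq3.not_ge (h.path q (hq.trans (Set.insert_subset hws hp)))

end IsCleanOn

/-- `G` is the union of its induced subgraphs on `L` and `R`, and the vertices of `L ∩ R` are twins
in `G[L]`: the shape of the join of two grafts, with the side of `(G₁, T₁)` as `L`. -/
structure IsTwinSeparation {V : Type*} (G : SimpleGraph V) (L R : Set V) : Prop where
  mem_or_mem (v : V) : v ∈ L ∨ v ∈ R
  mem_and_mem_or_mem_and_mem ⦃u v : V⦄ : G.Adj u v → u ∈ L ∧ v ∈ L ∨ u ∈ R ∧ v ∈ R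
  adj_of_adj ⦃x y a : V⦄ : x ∈ L ∩ R → y ∈ L ∩ R → a ∈ L → G.Adj x a → G.Adj y a

namespace IsTwinSeparation

variable {V : Type*} {G : SimpleGraph V} {L R T : Set V} {n : ℕ}

theorem mem_right_of_adj (h : IsTwinSeparation G L R) {u v : V} (huv : G.Adj u v) (hu : u ∉ L) :
    v ∈ R :=
  (h.mem_and_mem_or_mem_and_mem huv).elim (fun huv ↦ absurd huv.1 hu) And.right

theorem mem_left_of_adj (h : IsTwinSeparation G L R) {u v : V} (huv : G.Adj u v) (hu : u ∉ R) :
    v ∈ L :=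
  (h.mem_and_mem_or_mem_and_mem huv).elim And.right fun huv ↦ absurd huv.1 hu

theorem mem_right_of_notMem_left (h : IsTwinSeparation G L R) {v : V} (hv : v ∉ L) : v ∈ R :=
  (h.mem_or_mem v).resolve_left hv

theorem mem_left_of_notMem_right (h : IsTwinSeparation G L R) {v : V} (hv : v ∉ R) : v ∈ L :=
  (h.mem_or_mem v).resolve_right hv

theorem subset_or_subset_of_isClique (h : IsTwinSeparation G L R) {t : Set V} (ht : G.IsClique t) :
    t ⊆ L ∨ t ⊆ R := by
  by_contra! hnot
  obtain ⟨u, hut, hu⟩ := Set.not_subset.1 hnot.1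
  refine hnot.2 fun v hv ↦ ?_
  obtain rfl | hne := eq_or_ne u v
  · exact h.mem_right_of_notMem_left hu
  · exact h.mem_right_of_adj (ht hut hv hne) hu

theorem exists_adj_mem_inter_of_notMem_right (h : IsTwinSeparation G L R) {W : Type*}
    {H : SimpleGraph W} (hH : H.Preconnected) (f : H ↪g G) {i j : W} (hi : f i ∉ R) (hj : f j ∈ R) :
    ∃ a x, H.Adj a x ∧ f a ∉ R ∧ f x ∈ L ∩ R := by
  obtain ⟨walk⟩ := hH i j
  obtain ⟨d, -, ha, hx⟩ := walk.exists_boundary_dart (f ⁻¹' Rᶜ) hi (not_not_intro hj)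
  exact ⟨d.fst, d.snd, d.adj, ha, h.mem_left_of_adj (f.map_adj_iff.2 d.adj) ha, not_not.1 hx⟩

theorem range_subset_or_range_subset (h : IsTwinSeparation G L R) (p : pathGraph (n + 1) ↪g G)
    (h0 : p 0 ∈ L) (hlast : p (Fin.last n) ∈ L) : Set.range p ⊆ L ∨ Set.range p ⊆ R := by
  by_contra! hnot
  obtain ⟨_, ⟨j, rfl⟩, hj⟩ := Set.not_subset.1 hnot.1
  obtain ⟨_, ⟨i, rfl⟩, hi⟩ := Set.not_subset.1 hnot.2
  have hadj (k : Fin n) : G.Adj (p k.castSucc) (p k.succ) :=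
    p.map_adj_iff.2 (by simp [pathGraph_adj])
  obtain ⟨k, -, hkj, hs, hk⟩ :=
    exists_castSucc_mem_succ_notMem (S := p ⁻¹' L) (Fin.zero_le j) h0 hj
  obtain ⟨l, hjl, -, hl, ht⟩ :=
    exists_castSucc_mem_succ_notMem (S := p ⁻¹' Lᶜ) (Fin.le_last j) hj (not_not_intro hlast)
  have hs' : p k.castSucc ∈ L ∩ R := ⟨hs, h.mem_right_of_adj (hadj k).symm hk⟩
  have ht' : p l.succ ∈ L ∩ R := ⟨not_not.1 ht, h.mem_right_of_adj (hadj l) hl⟩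
  obtain ⟨a, x, hax, ha, hx⟩ := h.exists_adj_mem_inter_of_notMem_right
    (pathGraph_preconnected _) p hi (h.mem_right_of_notMem_left hj)
  -- Being twins, the vertices `p k` and `p (l + 1)` on either side of `p j` are both adjacent to
  -- `p a`, which leaves only `a = j`.
  have hadj_a {y} (hy : p y ∈ L ∩ R) : (pathGraph (n + 1)).Adj y a :=
    p.map_adj_iff.1 (h.adj_of_adj hx hy (h.mem_left_of_notMem_right ha) (p.map_adj_iff.2 hax.symm))
  have haj : a = j := by
    have hsa := hadj_a hs'
    have hta := hadj_a ht'
    simp only [pathGraph_adj, Fin.val_castSucc, Fin.val_succ, Fin.le_def, Fin.ext_iff] at *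
    lia
  exact ha (haj ▸ h.mem_right_of_notMem_left hj)

theorem ncard_preimage_le_two (h : IsTwinSeparation G L R) (hTL : T ⊆ L)
    (hL : IsCleanOn G L T) (hR : IsCleanOn G R L) (p : pathGraph n ↪g G) : (p ⁻¹' T).ncard ≤ 2 := by
  obtain hT | hT := (p ⁻¹' T).eq_empty_or_nonempty
  · simp [hT]
  obtain ⟨m, q, h0, hlast, hq⟩ := exists_pathGraph_embedding_trim p hT
  rw [← hq]
  obtain hqL | hqR := h.range_subset_or_range_subset q (hTL h0) (hTL hlast)
  · exact hL.path q hqL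
  · exact (Set.ncard_le_ncard (Set.preimage_mono hTL)).trans (hR.path q hqR)

theorem preimage_neighborSet_subset_left (h : IsTwinSeparation G L R) {ι : Type*} (f : ι → V)
    {w : V} (hw : w ∉ R) : f ⁻¹' G.neighborSet w ⊆ f ⁻¹' L :=
  fun _ hi ↦ h.mem_left_of_adj hi hw

theorem preimage_neighborSet_subset_inter (h : IsTwinSeparation G L R) {ι : Type*} (f : ι → V)
    {w : V} (hf : Set.range f ⊆ L) (hw : w ∉ L) : f ⁻¹' G.neighborSet w ⊆ f ⁻¹' (L ∩ R) :=
  fun i hi ↦ ⟨hf ⟨i, rfl⟩, h.mem_right_of_adj hi hw⟩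

theorem ncard_preimage_neighborSet_pathGraph_le_two (h : IsTwinSeparation G L R) (hTL : T ⊆ L)
    (hLR : L ∩ R ⊆ T) (hL : IsCleanOn G L T) (hR : IsCleanOn G R L) (p : pathGraph (n + 1) ↪g G)
    (h0 : p 0 ∈ T) (hlast : p (Fin.last n) ∈ T) {f : V} (hf : f ∉ Set.range p) :
    (p ⁻¹' G.neighborSet f).ncard ≤ 2 := by
  obtain hpL | hpR := h.range_subset_or_range_subset p (hTL h0) (hTL hlast)
  · by_cases hfL : f ∈ L
    · exact hL.fan p hpL h0 hlast hfL hf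
    · have hsub := (h.preimage_neighborSet_subset_inter p hpL hfL).trans (Set.preimage_mono hLR)
      exact (Set.ncard_le_ncard hsub).trans (hL.path p hpL)
  · by_cases hfR : f ∈ R
    · exact hR.fan p hpR (hTL h0) (hTL hlast) hfR hf
    · exact (Set.ncard_le_ncard (h.preimage_neighborSet_subset_left p hfR)).trans (hR.path p hpR)

theorem exists_pathGraph_embedding_of_mixed (h : IsTwinSeparation G L R)
    (c : cycleGraph (n + 2) ↪g G) {k : Fin (n + 2)} (hk : c k ∉ R) (hc : ¬ Set.range c ⊆ L) :
    ∃ d : pathGraph (n + 1) ↪g cycleGraph (n + 2), Set.range d = {k}ᶜ ∧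
      Set.range (c.comp d) ⊆ R ∧ c (d 0) ∈ L ∧ c (d (Fin.last n)) ∈ L ∧
      ∀ i, c (d i) ∈ L → G.Adj (c k) (c (d i)) := by
  obtain ⟨d, hd, hadj⟩ := exists_pathGraph_embedding_compl k
  have hends {i} (hi : i = 0 ∨ i = Fin.last n) : G.Adj (c k) (c (d i)) :=
    c.map_adj_iff.2 ((hadj i).2 hi)
  have h0 := h.mem_left_of_adj (hends (.inl rfl)) hk
  have hlast := h.mem_left_of_adj (hends (.inr rfl)) hk
  have hdR : Set.range (c.comp d) ⊆ R := by
    refine (h.range_subset_or_range_subset (c.comp d) h0 hlast).resolve_left fun hdL ↦ hc ?_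
    rintro _ ⟨i, rfl⟩
    obtain rfl | hik := eq_or_ne i k
    · exact h.mem_left_of_notMem_right hk
    · obtain ⟨j, rfl⟩ : i ∈ Set.range d := hd ▸ hik
      exact hdL ⟨j, rfl⟩
  refine ⟨d, hd, hdR, h0, hlast, fun i hi ↦ ?_⟩
  exact (h.adj_of_adj ⟨h0, hdR ⟨0, rfl⟩⟩ ⟨hi, hdR ⟨i, rfl⟩⟩ (h.mem_left_of_notMem_right hk)
    (hends (.inl rfl)).symm).symm

theorem ncard_preimage_neighborSet_le_two_of_mixed (h : IsTwinSeparation G L R)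
    (hL : G.CliqueFreeOn L 3) (hR : IsCleanOn G R L) (c : cycleGraph (n + 2) ↪g G)
    (hcL : ¬ Set.range c ⊆ L) (hcR : ¬ Set.range c ⊆ R) {w : V} (hw : w ∉ Set.range c) :
    (c ⁻¹' G.neighborSet w).ncard ≤ 2 := by
  obtain ⟨_, ⟨k, rfl⟩, hk⟩ := Set.not_subset.1 hcR
  obtain ⟨d, hd, hdR, h0, hlast, hadj⟩ := h.exists_pathGraph_embedding_of_mixed c hk hcL
  have hkL := h.mem_left_of_notMem_right hk
  have hwd : w ∉ Set.range (c.comp d) := fun hwd ↦ hw (Set.range_comp_subset_range d c hwd)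
  have hcard : (c ⁻¹' G.neighborSet w \ {k}).ncard = (c.comp d ⁻¹' G.neighborSet w).ncard :=
    ncard_sdiff_singleton_eq_ncard_preimage d.injective hd _
  have hcard_le := Set.ncard_le_ncard_sdiff_add_ncard (c ⁻¹' G.neighborSet w) {k}
  rw [Set.ncard_singleton] at hcard_le
  by_cases hwL : w ∈ L
  · by_cases hwR : w ∈ R
    · have := hR.ncard_preimage_neighborSet_le_one (c.comp d) hdR h0 hlast hwR hwL hwd
      lia
    by_cases hwk : G.Adj w (c k)
    · have hempty : c.comp d ⁻¹' G.neighborSet w = ∅ := by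
        refine Set.eq_empty_of_forall_notMem fun i hi ↦ ?_
        have hiL := h.mem_left_of_adj hi hwR
        exact cliqueFreeOn_three_iff.1 hL w hwL _ hkL _ hiL hwk hi (hadj i hiL)
      rw [hempty, Set.ncard_empty] at hcard
      lia
    · rw [Set.sdiff_singleton_eq_self (by exact hwk)] at hcard
      rw [hcard]
      exact (Set.ncard_le_ncard (h.preimage_neighborSet_subset_left _ hwR)).trans (hR.path _ hdR)
  · have hwk : ¬ G.Adj w (c k) := fun hwk ↦ hwL (h.mem_left_of_adj hwk.symm hk)
    rw [Set.sdiff_singleton_eq_self (by exact hwk)] at hcard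
    rw [hcard]
    exact hR.fan (c.comp d) hdR h0 hlast (h.mem_right_of_notMem_left hwL) hwd

theorem ncard_preimage_neighborSet_cycleGraph_le_two (h : IsTwinSeparation G L R)
    (hLR : L ∩ R ⊆ T) (hL : IsCleanOn G L T) (hR : IsCleanOn G R L) (c : cycleGraph n ↪g G)
    (hn : 4 ≤ n) {w : V} (hw : w ∉ Set.range c) : (c ⁻¹' G.neighborSet w).ncard ≤ 2 := by
  obtain ⟨n, rfl⟩ := Nat.exists_eq_add_of_le' (show 2 ≤ n by lia)
  by_cases hcL : Set.range c ⊆ L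
  · by_cases hwL : w ∈ L
    · exact hL.wheel c hn hcL hwL hw
    · have hsub := (h.preimage_neighborSet_subset_inter c hcL hwL).trans (Set.preimage_mono hLR)
      exact (Set.ncard_le_ncard hsub).trans (hL.ncard_preimage_cycleGraph_le_two c hcL)
  by_cases hcR : Set.range c ⊆ R
  · by_cases hwR : w ∈ R
    · exact hR.wheel c hn hcR hwR hw
    · exact (Set.ncard_le_ncard (h.preimage_neighborSet_subset_left c hwR)).trans
        (hR.ncard_preimage_cycleGraph_le_two c hcR)
  · exact h.ncard_preimage_neighborSet_le_two_of_mixed hL.cliqueFreeOn hR c hcL hcR hw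

theorem isCleanOn_univ (h : IsTwinSeparation G L R) (hTL : T ⊆ L) (hLR : L ∩ R ⊆ T)
    (hL : IsCleanOn G L T) (hR : IsCleanOn G R L) : IsCleanOn G Set.univ T where
  cliqueFreeOn _ _ ht := (h.subset_or_subset_of_isClique ht.isClique).elim
    (fun htL ↦ hL.cliqueFreeOn htL ht) fun htR ↦ hR.cliqueFreeOn htR ht
  isIndepSet := by
    rw [Set.univ_inter, ← Set.inter_eq_right.2 hTL]
    exact hL.isIndepSet
  wheel _ c _ hn _ _ hw := h.ncard_preimage_neighborSet_cycleGraph_le_two hLR hL hR c hn hw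
  fan _ p _ _ h0 hlast _ hf :=
    h.ncard_preimage_neighborSet_pathGraph_le_two hTL hLR hL hR p h0 hlast hf
  path _ p _ := h.ncard_preimage_le_two hTL hL hR p

end IsTwinSeparation

section Join

variable {V₁ V₂ : Type u} {G₁ : SimpleGraph V₁} {G₂ : SimpleGraph V₂} {X : Set V₁} {T₂ : Set V₂}
  {φ : X ≃ T₂}

theorem joinGraph_adj_inl_inl {u v : V₁} :
    (joinGraph G₁ G₂ X T₂ φ).Adj (Sum.inl u) (Sum.inl v) ↔
      G₁.Adj u v ∨ ∃ hu hv, G₂.Adj (φ ⟨u, hu⟩) (φ ⟨v, hv⟩) := by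
  have h₁ : G₁.Adj u v → u ≠ v := Adj.ne
  have h₂ (hu hv) : G₂.Adj (φ ⟨u, hu⟩) (φ ⟨v, hv⟩) → u ≠ v := by
    rintro h rfl
    exact h.ne rfl
  simp only [joinGraph, fromRel_adj, Sum.inl.injEq, Subtype.exists]
  grind [SimpleGraph.adj_comm]

theorem joinGraph_adj_inl_inr {u : V₁} {v : {v // v ∉ T₂}} :
    (joinGraph G₁ G₂ X T₂ φ).Adj (Sum.inl u) (Sum.inr v) ↔ ∃ hu, G₂.Adj (φ ⟨u, hu⟩) v := by
  simp only [joinGraph, fromRel_adj]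
  grind [SimpleGraph.adj_comm]

theorem joinGraph_adj_inr_inr {u v : {v // v ∉ T₂}} :
    (joinGraph G₁ G₂ X T₂ φ).Adj (Sum.inr u) (Sum.inr v) ↔ G₂.Adj u v := by
  have h : G₂.Adj u v → u ≠ v := fun huv hne ↦ huv.ne (congrArg _ hne)
  simp only [joinGraph, fromRel_adj]
  grind [SimpleGraph.adj_comm]

theorem exists_joinGraph_embedding_left (hT₂ : ∀ u ∈ T₂, ∀ v ∈ T₂, ¬ G₂.Adj u v) :
    ∃ e : G₁ ↪g joinGraph G₁ G₂ X T₂ φ, ⇑e = Sum.inl := by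
  refine ⟨⟨⟨Sum.inl, Sum.inl_injective⟩, fun {u v} ↦ joinGraph_adj_inl_inl.trans ?_⟩, rfl⟩
  exact or_iff_left fun ⟨_, _, h⟩ ↦ hT₂ _ (Subtype.coe_prop _) _ (Subtype.coe_prop _) h

theorem exists_joinGraph_embedding_right (hX : ∀ x ∈ X, ∀ y ∈ X, ¬ G₁.Adj x y) :
    ∃ e : G₂ ↪g joinGraph G₁ G₂ X T₂ φ,
      Set.range e = Sum.inl '' X ∪ Set.range Sum.inr ∧ e ⁻¹' Set.range Sum.inl = T₂ := by
  classical
  let ψ : X ⊕ {v : V₂ // v ∉ T₂} ≃ V₂ :=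
    (Equiv.sumCongr φ (Equiv.refl _)).trans (Equiv.sumCompl (· ∈ T₂))
  let f : V₂ → V₁ ⊕ {v : V₂ // v ∉ T₂} := Sum.map Subtype.val id ∘ ψ.symm
  have hf : Function.Injective f :=
    (Sum.map_injective.2 ⟨Subtype.val_injective, Function.injective_id⟩).comp ψ.symm.injective
  have hadj (u v) : (joinGraph G₁ G₂ X T₂ φ).Adj (f u) (f v) ↔ G₂.Adj u v := by
    obtain ⟨x | x, rfl⟩ := ψ.surjective u <;> obtain ⟨y | y, rfl⟩ := ψ.surjective v
    · simp [f, ψ, joinGraph_adj_inl_inl, hX x x.2 y y.2]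
    · simp [f, ψ, joinGraph_adj_inl_inr]
    · simp [f, ψ, adj_comm _ (Sum.inr x), joinGraph_adj_inl_inr, G₂.adj_comm x]
    · simp [f, ψ, joinGraph_adj_inr_inr]
  refine ⟨⟨⟨f, hf⟩, hadj _ _⟩, ?_, ?_⟩
  · change Set.range f = _
    rw [ψ.symm.surjective.range_comp]
    ext (v | v) <;> simp
  · ext v
    change f v ∈ Set.range Sum.inl ↔ v ∈ T₂
    obtain ⟨x | x, rfl⟩ := ψ.surjective v <;> simp [f, ψ, x.2]

theorem isTwinSeparation_joinGraph (hT₂ : ∀ u ∈ T₂, ∀ v ∈ T₂, ¬ G₂.Adj u v)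
    (hX : ∀ x ∈ X, ∀ y ∈ X, G₁.neighborSet x = G₁.neighborSet y) :
    IsTwinSeparation (joinGraph G₁ G₂ X T₂ φ) (Set.range Sum.inl)
      (Sum.inl '' X ∪ Set.range Sum.inr) where
  mem_or_mem v := by cases v <;> simp
  mem_and_mem_or_mem_and_mem u v huv := by
    cases u <;> cases v
    · simp
    · obtain ⟨hu, -⟩ := joinGraph_adj_inl_inr.1 huv
      simp [hu]
    · obtain ⟨hv, -⟩ := joinGraph_adj_inl_inr.1 huv.symm
      simp [hv]
    · simp
  adj_of_adj := by
    obtain ⟨e, he⟩ := exists_joinGraph_embedding_left (G₁ := G₁) (φ := φ) hT₂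
    rw [← he]
    rintro _ _ _ ⟨⟨x, rfl⟩, hx⟩ ⟨⟨y, rfl⟩, hy⟩ ⟨a, rfl⟩ hxa
    have hxX : x ∈ X := by simpa [he] using hx
    have hyX : y ∈ X := by simpa [he] using hy
    rw [e.map_adj_iff] at hxa ⊢
    exact (hX x hxX y hyX).le hxa

end Join

/-- **Lemma.** If `(G₁, T₁)` and `(G₂, T₂)` are clean grafts and `X ⊆ T₁` is a set of
vertices with `|X| = |T₂|` (witnessed by the bijection `φ`) all of which have the same
neighbourhood in `G₁`, then `join((G₁,T₁), X, (G₂,T₂))` is clean. -/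
theorem join_isCleanGraft {V₁ V₂ : Type u} (G₁ : SimpleGraph V₁) (T₁ : Set V₁)
    (G₂ : SimpleGraph V₂) (T₂ : Set V₂)
    (h₁ : IsCleanGraft G₁ T₁) (h₂ : IsCleanGraft G₂ T₂)
    (X : Set V₁) (hX : X ⊆ T₁)
    (hnb : ∀ x ∈ X, ∀ y ∈ X, G₁.neighborSet x = G₁.neighborSet y)
    (φ : X ≃ T₂) :
    IsCleanGraft (joinGraph G₁ G₂ X T₂ φ) (joinT T₁ T₂) := by
  obtain ⟨e₁, he₁⟩ := exists_joinGraph_embedding_left (G₁ := G₁) (φ := φ) h₂.2.1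
  obtain ⟨e₂, hrange, hpre⟩ := exists_joinGraph_embedding_right (G₂ := G₂) (φ := φ)
    fun x hx y hy ↦ h₁.2.1 x (hX hx) y (hX hy)
  have hsep := isTwinSeparation_joinGraph (φ := φ) h₂.2.1 hnb
  have hleft : IsCleanOn (joinGraph G₁ G₂ X T₂ φ) (Set.range Sum.inl) (joinT T₁ T₂) := by
    rw [← he₁]
    apply IsCleanOn.range
    rwa [he₁, joinT, Set.preimage_image_eq _ Sum.inl_injective, isCleanOn_univ_iff]
  have hright : IsCleanOn (joinGraph G₁ G₂ X T₂ φ) (Sum.inl '' X ∪ Set.range Sum.inr)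
      (Set.range Sum.inl) := by
    rw [← hrange]
    apply IsCleanOn.range
    rwa [hpre, isCleanOn_univ_iff]
  have hinter : Set.range Sum.inl ∩ (Sum.inl '' X ∪ Set.range Sum.inr) ⊆ joinT T₁ T₂ := by
    rintro _ ⟨⟨v, rfl⟩, hv⟩
    exact ⟨v, hX (by simpa using hv), rfl⟩
  exact isCleanOn_univ_iff.1
    (hsep.isCleanOn_univ (Set.image_subset_range _ _) hinter hleft hright)
end

section
/- Let k be a positive integer. Let G* be the graph obtained from the k-th Burling graph G'_k by adding, for each stable set S ∈ S_k, a new vertex v_S whose neighbourhood is exactly S. Then the graft (G*, {v_S : S ∈ S_k}) is isomorphic to the graft (G_k, T_k). -/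
universe u

/-!
Both constructions are governed by one recursion. A graft whose distinguished set is stable amounts
to a graph on the remaining vertices together with a family of neighbourhoods, one for each
distinguished vertex. In these terms a step of either construction replaces every distinguished
vertex `u` by two vertices for each distinguished `v`: the first sees `N(u)` and the copy of `N(v)`
in a fresh copy of the graph indexed by `u`, the second sees `N(u)` and a fresh vertex `v_u` joined
to that copy of `N(v)`. For `NEXT` these are the stable sets `S ∪ T` and `S ∪ {v_{S,T}}`; for grafts
they are the vertices of `X_u` glued onto `v ∈ S_u` and onto the pendant `t_{u,v}`.
-/

theorem comap_fromRel_eq {V W : Type*} {r : V → V → Prop} {f : W → V} {G : SimpleGraph W}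
    (hf : Function.Injective f) (of_rel : ∀ x y, r (f x) (f y) → G.Adj x y)
    (rel_of : ∀ x y, G.Adj x y → r (f x) (f y) ∨ r (f y) (f x)) :
    (SimpleGraph.fromRel r).comap f = G := by
  ext x y
  constructor
  · rintro ⟨-, h | h⟩
    · exact of_rel x y h
    · exact (of_rel y x h).symm
  · exact fun h => ⟨hf.ne h.ne, rel_of x y h⟩

theorem fromRel_eq {V : Type*} {r : V → V → Prop} {G : SimpleGraph V}
    (of_rel : ∀ x y, r x y → G.Adj x y) (rel_of : ∀ x y, G.Adj x y → r x y ∨ r y x) :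
    SimpleGraph.fromRel r = G :=
  comap_fromRel_eq Function.injective_id of_rel rel_of

theorem isIndepSet_fromRel {V : Type*} {r : V → V → Prop} {s : Set V}
    (h : ∀ a ∈ s, ∀ b ∈ s, ¬ r a b) : (SimpleGraph.fromRel r).IsIndepSet s := by
  rintro a ha b hb - ⟨-, hab | hba⟩
  · exact h a ha b hb hab
  · exact h b hb a ha hba

/-- A graft whose distinguished set is stable, presented by the graph induced on the vertices `V`
outside the distinguished set and by the neighbourhood in `V` of each distinguished vertex
`t : T`. -/
structure StableGraft (V T : Type*) where
  graph : SimpleGraph V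
  nbhd : T → Set V

namespace StableGraft

variable {V T : Type*}

/-- The underlying graph of a stable graft, on all vertices, distinguished ones included. -/
def toGraph (M : StableGraft V T) : SimpleGraph (V ⊕ T) where
  Adj
    | .inl x, .inl y => M.graph.Adj x y
    | .inl x, .inr t => x ∈ M.nbhd t
    | .inr t, .inl x => x ∈ M.nbhd t
    | .inr _, .inr _ => False
  symm.symm := by
    rintro (x | t) (y | s) h
    · exact h.symm
    all_goals exact h
  loopless.irrefl := by
    rintro (x | t)
    · exact M.graph.irrefl
    · exact id

/-- The common recursion step of the two constructions of Burling graphs. A vertex is an old vertex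
`x`, the copy `(u, x)` of `x` in the copy of the graph indexed by `u`, or the new vertex `(u, v)`
joined to the copy of the neighbourhood of `v`. A distinguished vertex is a pair of `u` and either
`inl v` or `inr v`, which is adjacent to the neighbourhood of `u` and, respectively, to the copy of
the neighbourhood of `v` or to the new vertex `(u, v)`. -/
def next (M : StableGraft V T) : StableGraft (V ⊕ (T × V ⊕ T × T)) (T × (T ⊕ T)) where
  graph :=
    { Adj
        | .inl x, .inl y => M.graph.Adj x y
        | .inr (.inl (u, x)), .inr (.inl (v, y)) => u = v ∧ M.graph.Adj x y
        | .inr (.inl (u, x)), .inr (.inr (v, t)) => u = v ∧ x ∈ M.nbhd t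
        | .inr (.inr (v, t)), .inr (.inl (u, x)) => u = v ∧ x ∈ M.nbhd t
        | _, _ => False
      symm.symm := by
        rintro (x | ⟨u, x⟩ | ⟨u, t⟩) (y | ⟨v, y⟩ | ⟨v, s⟩) h
        · exact h.symm
        case inr.inl.inr.inl => exact ⟨h.1.symm, h.2.symm⟩
        all_goals exact h
      loopless.irrefl := by
        rintro (x | ⟨u, x⟩ | ⟨u, t⟩)
        · exact M.graph.irrefl
        · exact fun h => M.graph.irrefl h.2
        · exact id }
  nbhd
    | (u, .inl v) => .inl '' M.nbhd u ∪ (fun x => .inr (.inl (u, x))) '' M.nbhd v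
    | (u, .inr v) => insert (.inr (.inr (u, v))) (.inl '' M.nbhd u)

section NextNbhd

variable (M : StableGraft V T)

theorem inl_mem_next_nbhd (x : V) (p : T × (T ⊕ T)) :
    .inl x ∈ M.next.nbhd p ↔ x ∈ M.nbhd p.1 := by
  obtain ⟨u, v | v⟩ := p <;> simp [next]

theorem copy_mem_next_nbhd (u : T) (x : V) (p : T × (T ⊕ T)) :
    .inr (.inl (u, x)) ∈ M.next.nbhd p ↔ u = p.1 ∧ ∃ v, p.2 = .inl v ∧ x ∈ M.nbhd v := by
  obtain ⟨u', v | v⟩ := p <;> simp [next, eq_comm, and_comm]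

theorem new_mem_next_nbhd (u v : T) (p : T × (T ⊕ T)) :
    .inr (.inr (u, v)) ∈ M.next.nbhd p ↔ p = (u, .inr v) := by
  obtain ⟨u', v' | v'⟩ := p <;> simp [next, eq_comm]

variable {M}

theorem next_nbhd_injective (hM : Function.Injective M.nbhd) :
    Function.Injective M.next.nbhd := by
  have new_eq {p : T × (T ⊕ T)} {u v : T} (h : M.next.nbhd p = M.next.nbhd (u, .inr v)) :
      p = (u, .inr v) := by
    rw [← new_mem_next_nbhd M, h, new_mem_next_nbhd]
  rintro ⟨u, v | v⟩ ⟨u', v' | v'⟩ h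
  · have hu : u = u' := hM <| Set.ext fun x => by
      simpa only [inl_mem_next_nbhd] using Set.ext_iff.mp h (.inl x)
    subst hu
    have hv : v = v' := hM <| Set.ext fun x => by
      simpa [copy_mem_next_nbhd] using Set.ext_iff.mp h (.inr (.inl (u, x)))
    rw [hv]
  · exact new_eq h
  · exact (new_eq h.symm).symm
  · exact new_eq h

end NextNbhd

variable {V' T' V'' T'' : Type*}

/-- An isomorphism of grafts matching their distinguished vertices, in the presentation by
neighbourhoods. -/
structure Iso (M : StableGraft V T) (M' : StableGraft V' T') where
  vertexIso : M.graph ≃g M'.graph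
  indexEquiv : T ≃ T'
  mem_nbhd_iff : ∀ t x, vertexIso x ∈ M'.nbhd (indexEquiv t) ↔ x ∈ M.nbhd t

namespace Iso

variable {M : StableGraft V T} {M' : StableGraft V' T'} {M'' : StableGraft V'' T''}

/-- Composition of isomorphisms of stable grafts. -/
def trans (φ : M.Iso M') (ψ : M'.Iso M'') : M.Iso M'' where
  vertexIso := φ.vertexIso.trans ψ.vertexIso
  indexEquiv := φ.indexEquiv.trans ψ.indexEquiv
  mem_nbhd_iff t x := (ψ.mem_nbhd_iff _ _).trans (φ.mem_nbhd_iff t x)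

/-- The isomorphism of underlying graphs; it respects distinguished vertices because it acts on the
two summands separately. -/
def toGraphIso (φ : M.Iso M') : M.toGraph ≃g M'.toGraph where
  toEquiv := .sumCongr φ.vertexIso.toEquiv φ.indexEquiv
  map_rel_iff' := by
    rintro (x | t) (y | s)
    · exact φ.vertexIso.map_adj_iff
    · exact φ.mem_nbhd_iff s x
    · exact φ.mem_nbhd_iff t y
    · exact Iff.rfl

/-- Functoriality of the recursion step. -/
def next (φ : M.Iso M') : M.next.Iso M'.next where
  vertexIso :=
    { toEquiv := .sumCongr φ.vertexIso.toEquiv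
        (.sumCongr (.prodCongr φ.indexEquiv φ.vertexIso.toEquiv)
          (.prodCongr φ.indexEquiv φ.indexEquiv))
      map_rel_iff' := by
        rintro (x | ⟨u, x⟩ | ⟨u, t⟩) (y | ⟨v, y⟩ | ⟨v, s⟩) <;>
          simp [StableGraft.next, φ.mem_nbhd_iff, φ.vertexIso.map_adj_iff] }
  indexEquiv := .prodCongr φ.indexEquiv (.sumCongr φ.indexEquiv φ.indexEquiv)
  mem_nbhd_iff := by
    rintro ⟨t, s⟩ (x | ⟨u, x⟩ | ⟨u, v⟩)
    · simp [inl_mem_next_nbhd, φ.mem_nbhd_iff]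
    · rcases s with s | s <;> simp [copy_mem_next_nbhd, φ.mem_nbhd_iff]
    · rcases s with s | s <;> simp [new_mem_next_nbhd]

end Iso

end StableGraft

namespace GSPair

/-- The graft `(G*, {v_S : S ∈ 𝒮})` of a graph–stable-set pair. -/
def toStableGraft (P : GSPair) : StableGraft P.V P.S where
  graph := P.G
  nbhd := Subtype.val

variable (P : GSPair)

theorem GStar_eq_toGraph : GStar P = P.toStableGraft.toGraph := by
  refine fromRel_eq ?_ ?_
  · rintro _ _ (⟨x, y, rfl, rfl, h⟩ | ⟨S, x, rfl, rfl, h⟩) <;> exact h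
  · rintro (x | S) (y | R) h
    · exact .inl (.inl ⟨x, y, rfl, rfl, h⟩)
    · exact .inr (.inr ⟨R, x, rfl, rfl, h⟩)
    · exact .inl (.inr ⟨S, y, rfl, rfl, h⟩)
    · exact h.elim

theorem NEXT_graph : (NEXT P).G = P.toStableGraft.next.graph := by
  refine fromRel_eq ?_ ?_
  · rintro _ _ (⟨x, y, rfl, rfl, h⟩ | ⟨S, x, y, rfl, rfl, h⟩ | ⟨S, R, x, rfl, rfl, h⟩)
    · exact h
    · exact ⟨rfl, h⟩
    · exact ⟨rfl, h⟩
  · rintro (x | ⟨S, x⟩ | ⟨S, R⟩) (y | ⟨S', y⟩ | ⟨S', R'⟩) h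
    case inl.inl => exact .inl (.inl ⟨x, y, rfl, rfl, h⟩)
    case inr.inl.inr.inl =>
      obtain ⟨rfl, h⟩ := h
      exact .inl (.inr (.inl ⟨S, x, y, rfl, rfl, h⟩))
    case inr.inl.inr.inr =>
      obtain ⟨rfl, h⟩ := h
      exact .inr (.inr (.inr ⟨S, R', x, rfl, rfl, h⟩))
    case inr.inr.inr.inl =>
      obtain ⟨rfl, h⟩ := h
      exact .inl (.inr (.inr ⟨S', R, y, rfl, rfl, h⟩))
    all_goals exact h.elim

theorem NEXT_stableSets : (NEXT P).S = Set.range P.toStableGraft.next.nbhd := by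
  ext A
  constructor
  · rintro ⟨S, R, rfl | rfl⟩
    · exact ⟨(S, .inl R), rfl⟩
    · exact ⟨(S, .inr R), rfl⟩
  · rintro ⟨⟨S, R | R⟩, rfl⟩
    · exact ⟨S, R, .inl rfl⟩
    · exact ⟨S, R, .inr rfl⟩

/-- `NEXT` realises the recursion step on stable grafts. -/
noncomputable def nextIso : P.toStableGraft.next.Iso (NEXT P).toStableGraft where
  vertexIso :=
    { toEquiv := Equiv.refl _
      map_rel_iff' {x y} := (congrArg (·.Adj x y) P.NEXT_graph).to_iff }
  indexEquiv :=
    (Equiv.ofInjective _ (StableGraft.next_nbhd_injective Subtype.val_injective)).trans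
      (Equiv.setCongr P.NEXT_stableSets.symm)
  mem_nbhd_iff _ _ := Iff.rfl

end GSPair

namespace GraftData

variable (Q : GraftData)

/-- The stable graft left from `(G, T)` on discarding the edges inside `T`. -/
def toStableGraft : StableGraft {v // v ∉ Q.T} Q.T where
  graph := Q.G.comap Subtype.val
  nbhd t := {x | Q.G.Adj t x}

variable {Q} in
/-- The graft `(G, T)` with `T` stable is its associated stable graft. -/
noncomputable def toGraphIso (hT : Q.G.IsIndepSet Q.T) : Q.toStableGraft.toGraph ≃g Q.G where
  toEquiv := by
    classical exact (Equiv.sumComm _ _).trans (Equiv.sumCompl (· ∈ Q.T))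
  map_rel_iff' := by
    rintro (x | t) (y | s)
    · exact Iff.rfl
    · exact Q.G.adj_comm _ _
    · exact Iff.rfl
    · exact iff_of_false (fun h => hT t.2 s.2 h.ne h) id

theorem inl_mem_nextGraft_iff (x : Q.V) : .inl x ∈ (nextGraft Q).T ↔ x ∈ Q.T := by
  constructor
  · rintro (⟨u, hu, h⟩ | ⟨c, h⟩)
    · cases h; exact hu
    · cases h
  · exact fun hx => .inl ⟨x, hx, rfl⟩

theorem inr_inl_mem_nextGraft (c : Σ u : Q.T, {w : Q.T ⊕ Q.T // w ≠ .inl u}) :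
    .inr (.inl c) ∈ (nextGraft Q).T :=
  .inr ⟨c, rfl⟩

theorem inr_inr_notMem_nextGraft (p : Q.T × ({v : Q.V // v ∉ Q.T} ⊕ Q.T)) :
    .inr (.inr p) ∉ (nextGraft Q).T := by
  rintro (⟨u, -, h⟩ | ⟨c, h⟩) <;> cases h

theorem nextGraft_isIndepSet (hT : Q.G.IsIndepSet Q.T) :
    (nextGraft Q).G.IsIndepSet (nextGraft Q).T := by
  have stable {x y : Q.V} (hx : .inl x ∈ (nextGraft Q).T) (hy : .inl y ∈ (nextGraft Q).T)
      (h : Q.G.Adj x y) : False :=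
    hT ((Q.inl_mem_nextGraft_iff x).mp hx) ((Q.inl_mem_nextGraft_iff y).mp hy) h.ne h
  refine isIndepSet_fromRel ?_
  rintro _ ha _ hb (⟨x, y, rfl, rfl, h⟩ | ⟨x, u, w, rfl, rfl, h⟩ | ⟨u, x, -, rfl, -⟩ |
    ⟨u, w, v, x, -, rfl, -⟩ | ⟨u, w, v, -, rfl, -⟩ | ⟨u, x, y, -, rfl, -⟩ | ⟨u, x, v, -, rfl, -⟩)
  · exact stable ha hb h
  · exact stable ha ((Q.inl_mem_nextGraft_iff u).mpr u.2) h.symm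
  all_goals exact Q.inr_inr_notMem_nextGraft _ hb

/-- The vertices of `nextGraft Q` outside its distinguished set, read as the vertices of the
recursion step. -/
def nextVertexEquiv :
    {a // a ∉ (nextGraft Q).T} ≃ {v // v ∉ Q.T} ⊕ (Q.T × {v // v ∉ Q.T} ⊕ Q.T × Q.T) where
  toFun
    | ⟨.inl x, hx⟩ => .inl ⟨x, mt (Q.inl_mem_nextGraft_iff x).mpr hx⟩
    | ⟨.inr (.inl c), hc⟩ => absurd (Q.inr_inl_mem_nextGraft c) hc
    | ⟨.inr (.inr (u, .inl x)), _⟩ => .inr (.inl (u, x))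
    | ⟨.inr (.inr (u, .inr v)), _⟩ => .inr (.inr (u, v))
  invFun
    | .inl x => ⟨.inl x.1, mt (Q.inl_mem_nextGraft_iff x).mp x.2⟩
    | .inr (.inl (u, x)) => ⟨.inr (.inr (u, .inl x)), Q.inr_inr_notMem_nextGraft _⟩
    | .inr (.inr (u, v)) => ⟨.inr (.inr (u, .inr v)), Q.inr_inr_notMem_nextGraft _⟩
  left_inv := by
    rintro ⟨x | c | ⟨u, x | v⟩, h⟩
    case inr.inl => exact absurd (Q.inr_inl_mem_nextGraft c) h
    all_goals rfl
  right_inv := by rintro (x | ⟨u, x⟩ | ⟨u, v⟩) <;> rfl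

/-- The distinguished vertices of `nextGraft Q`, read as those of the recursion step. In `X_u` it is
`u` itself that is identified with the copy of `u` in `S_u`, whence the index `inl u`. -/
def nextIndex : (nextGraft Q).T → Q.T × (Q.T ⊕ Q.T)
  | ⟨.inl u, hu⟩ =>
    let u : Q.T := ⟨u, (Q.inl_mem_nextGraft_iff u).mp hu⟩
    (u, .inl u)
  | ⟨.inr (.inl ⟨u, w⟩), _⟩ => (u, w)
  | ⟨.inr (.inr p), hp⟩ => absurd hp (Q.inr_inr_notMem_nextGraft p)

theorem nextIndex_bijective : Function.Bijective Q.nextIndex := by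
  constructor
  · rintro ⟨u | ⟨u, w⟩ | p, h⟩ ⟨v | ⟨v, w'⟩ | q, h'⟩ huv
    case inl.inl => cases huv; rfl
    case inl.inr.inl =>
      obtain ⟨rfl, hw⟩ := Prod.mk.inj huv
      exact absurd hw.symm w'.2
    case inr.inl.inl =>
      obtain ⟨rfl, hw⟩ := Prod.mk.inj huv
      exact absurd hw w.2
    case inr.inl.inr.inl =>
      obtain ⟨rfl, hw⟩ := Prod.mk.inj huv
      obtain rfl := Subtype.ext hw
      rfl
    all_goals exact absurd ‹_› (Q.inr_inr_notMem_nextGraft _)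
  · rintro ⟨u, w⟩
    by_cases hw : w = .inl u
    · exact ⟨⟨.inl u, (Q.inl_mem_nextGraft_iff u).mpr u.2⟩, by rw [hw]; rfl⟩
    · exact ⟨⟨.inr (.inl ⟨u, w, hw⟩), Q.inr_inl_mem_nextGraft _⟩, rfl⟩

theorem nextGraft_comap_notMem :
    (nextGraft Q).G.comap Subtype.val = Q.toStableGraft.next.graph.comap Q.nextVertexEquiv := by
  refine comap_fromRel_eq Subtype.val_injective ?_ ?_
  · rintro ⟨_, ha⟩ ⟨_, hb⟩ (⟨x, y, rfl, rfl, h⟩ | ⟨x, u, w, -, rfl, -⟩ | ⟨u, x, rfl, -⟩ |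
      ⟨u, w, v, x, rfl, -⟩ | ⟨u, w, v, rfl, -⟩ | ⟨u, x, y, rfl, rfl, h⟩ | ⟨u, x, v, rfl, rfl, h⟩)
    · exact h
    · exact absurd (Q.inr_inl_mem_nextGraft _) hb
    · exact absurd ((Q.inl_mem_nextGraft_iff u).mpr u.2) ha
    · exact absurd (Q.inr_inl_mem_nextGraft _) ha
    · exact absurd (Q.inr_inl_mem_nextGraft _) ha
    · exact ⟨rfl, h⟩
    · exact ⟨rfl, h⟩
  · intro x y
    obtain ⟨x, rfl⟩ := Q.nextVertexEquiv.symm.surjective x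
    obtain ⟨y, rfl⟩ := Q.nextVertexEquiv.symm.surjective y
    rcases x with x | ⟨u, x⟩ | ⟨u, v⟩ <;> rcases y with y | ⟨u', y⟩ | ⟨u', v'⟩ <;> intro h
    case inl.inl => exact .inl (.inl ⟨x, y, rfl, rfl, h⟩)
    case inr.inl.inr.inl =>
      obtain ⟨rfl, h⟩ := h
      exact .inl (.inr (.inr (.inr (.inr (.inr (.inl ⟨u, x, y, rfl, rfl, h⟩))))))
    case inr.inl.inr.inr =>
      obtain ⟨rfl, h⟩ := h
      exact .inl (.inr (.inr (.inr (.inr (.inr (.inr ⟨u, x, v', rfl, rfl, h⟩))))))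
    case inr.inr.inr.inl =>
      obtain ⟨rfl, h⟩ := h
      exact .inr (.inr (.inr (.inr (.inr (.inr (.inr ⟨u', y, v, rfl, rfl, h⟩))))))
    all_goals exact h.elim

section NextNbhd

open StableGraft

variable {Q} {t : (nextGraft Q).T} {x : {a // a ∉ (nextGraft Q).T}}

theorem mem_next_nbhd_of_nextGraft_adj (h : (nextGraft Q).G.Adj t x) :
    Q.nextVertexEquiv x ∈ Q.toStableGraft.next.nbhd (Q.nextIndex t) := by
  obtain ⟨_, ht⟩ := t
  obtain ⟨_, hx⟩ := x
  obtain ⟨-, h | h⟩ := h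
  · rcases h with ⟨x, y, rfl, rfl, h⟩ | ⟨x, u, w, rfl, rfl, -⟩ | ⟨u, x, rfl, rfl, h⟩ |
      ⟨u, w, v, x, rfl, rfl, hw, h⟩ | ⟨u, w, v, rfl, rfl, hw⟩ | ⟨u, x, y, rfl, -⟩ |
      ⟨u, x, v, rfl, -⟩
    · exact (inl_mem_next_nbhd ..).mpr h
    · exact absurd (Q.inr_inl_mem_nextGraft _) hx
    · exact (copy_mem_next_nbhd ..).mpr ⟨rfl, u, rfl, h⟩
    · exact (copy_mem_next_nbhd ..).mpr ⟨rfl, v, hw, h⟩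
    · exact (new_mem_next_nbhd ..).mpr (congrArg (Prod.mk u) hw)
    all_goals exact absurd ht (Q.inr_inr_notMem_nextGraft _)
  · rcases h with ⟨x, y, rfl, rfl, h⟩ | ⟨x, u, w, rfl, rfl, h⟩ | ⟨u, x, rfl, -⟩ |
      ⟨u, w, v, x, rfl, -⟩ | ⟨u, w, v, rfl, -⟩ | ⟨u, x, y, -, rfl, -⟩ | ⟨u, x, v, -, rfl, -⟩
    · exact (inl_mem_next_nbhd ..).mpr h.symm
    · exact (inl_mem_next_nbhd ..).mpr h
    · exact absurd ((Q.inl_mem_nextGraft_iff u).mpr u.2) hx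
    · exact absurd (Q.inr_inl_mem_nextGraft _) hx
    · exact absurd (Q.inr_inl_mem_nextGraft _) hx
    all_goals exact absurd ht (Q.inr_inr_notMem_nextGraft _)

theorem nextGraft_adj_of_mem_next_nbhd
    (h : Q.nextVertexEquiv x ∈ Q.toStableGraft.next.nbhd (Q.nextIndex t)) :
    (nextGraft Q).G.Adj t x := by
  refine ⟨fun htx => x.2 (htx ▸ t.2), ?_⟩
  obtain ⟨x, rfl⟩ := Q.nextVertexEquiv.symm.surjective x
  rw [Equiv.apply_symm_apply] at h
  obtain ⟨u | ⟨u, w⟩ | p, ht⟩ := t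
  · have hu := (Q.inl_mem_nextGraft_iff u).mp ht
    rcases x with x | ⟨u', x⟩ | ⟨u', v⟩
    · exact .inl (.inl ⟨u, x, rfl, rfl, (inl_mem_next_nbhd ..).mp h⟩)
    · obtain ⟨rfl, _, ⟨⟩, h⟩ := (copy_mem_next_nbhd ..).mp h
      exact .inl (.inr (.inr (.inl ⟨⟨u, hu⟩, x, rfl, rfl, h⟩)))
    · cases (new_mem_next_nbhd ..).mp h
  · rcases x with x | ⟨u', x⟩ | ⟨u', v⟩
    · exact .inr (.inr (.inl ⟨x, u, w, rfl, rfl, (inl_mem_next_nbhd ..).mp h⟩))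
    · obtain ⟨rfl, v, hw, h⟩ := (copy_mem_next_nbhd ..).mp h
      exact .inl (.inr (.inr (.inr (.inl ⟨u', w, v, x, rfl, rfl, hw, h⟩))))
    · obtain ⟨rfl, hw⟩ := Prod.mk.inj ((new_mem_next_nbhd ..).mp h)
      exact .inl (.inr (.inr (.inr (.inr (.inl ⟨u, w, v, rfl, rfl, hw⟩)))))
  · exact absurd ht (Q.inr_inr_notMem_nextGraft p)

end NextNbhd

/-- `nextGraft` realises the recursion step on stable grafts. -/
noncomputable def nextIso : (nextGraft Q).toStableGraft.Iso Q.toStableGraft.next where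
  vertexIso :=
    { toEquiv := Q.nextVertexEquiv
      map_rel_iff' {x y} := (congrArg (·.Adj x y) Q.nextGraft_comap_notMem.symm).to_iff }
  indexEquiv := .ofBijective _ Q.nextIndex_bijective
  mem_nbhd_iff _ _ := ⟨nextGraft_adj_of_mem_next_nbhd, mem_next_nbhd_of_nextGraft_adj⟩

end GraftData

theorem burlingGraft_isIndepSet (k : ℕ) : (BurlingGraft k).G.IsIndepSet (BurlingGraft k).T := by
  induction k with
  | zero => exact Set.pairwise_singleton _ _
  | succ k ih => exact GraftData.nextGraft_isIndepSet _ ih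

/-- The grafts `(K₂, {t})` and `(K₁, {V(K₁)})`, as stable grafts: one edge from the distinguished
vertex to the other one. -/
def burlingIsoZero : (BurlingGraft 0).toStableGraft.Iso (BurlingPair 0).toStableGraft where
  vertexIso :=
    { toFun _ := ()
      invFun _ := ⟨false, Bool.false_ne_true⟩
      left_inv := by rintro ⟨_ | _, h⟩ <;> [rfl; exact absurd rfl h]
      right_inv _ := rfl
      map_rel_iff' := by
        rintro ⟨_ | _, hx⟩ ⟨_ | _, hy⟩
        · exact iff_of_false id (SimpleGraph.irrefl _)
        all_goals exact absurd rfl ‹_› }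
  indexEquiv := Equiv.ofUnique ({true} : Set Bool) ({Set.univ} : Set (Set Unit))
  mem_nbhd_iff := by
    rintro ⟨_, rfl⟩ ⟨_ | _, hx⟩
    · exact iff_of_true (Set.mem_univ ()) Bool.false_ne_true.symm
    · exact absurd rfl hx

/-- Both sequences of grafts start from the same stable graft and follow the recursion
`StableGraft.next`. -/
noncomputable def burlingIso :
    ∀ k, (BurlingGraft k).toStableGraft.Iso (BurlingPair k).toStableGraft
  | 0 => burlingIsoZero
  | k + 1 => (GraftData.nextIso _).trans ((burlingIso k).next.trans (GSPair.nextIso _))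

/-- **Proposition.** Let `k` be a positive integer and let `G*` be the graph obtained from
the `k`-th Burling graph `G'_k` by adding, for each `S ∈ 𝒮_k`, a vertex `v_S` with
neighbourhood exactly `S`.  Then the graft `(G*, {v_S : S ∈ 𝒮_k})` is isomorphic to the
graft `(G_k, T_k)`. -/
theorem gstar_isomorphic_burlingGraft (k : ℕ) (hk : 0 < k) :
    ∃ e : GStar (BurlingPair (k - 1)) ≃g (BurlingGraft (k - 1)).G,
      ∀ a, e a ∈ (BurlingGraft (k - 1)).T ↔
        ∃ S : ↥(BurlingPair (k - 1)).S, a = Sum.inr S := by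
  rw [GSPair.GStar_eq_toGraph]
  let e := (burlingIso (k - 1)).toGraphIso.symm.trans
    (GraftData.toGraphIso (burlingGraft_isIndepSet (k - 1)))
  refine ⟨e, ?_⟩
  rintro (x | S)
  · exact iff_of_false ((burlingIso (k - 1)).vertexIso.symm x).2 (by simp)
  · exact iff_of_true ((burlingIso (k - 1)).indexEquiv.symm S).2 ⟨S, rfl⟩
end
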